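/- (Ando–Hiai inequality, norm form) For positive definite matrices A, B, 0 ≤ α ≤ 1 and r ≥ 1, the largest eigenvalue satisfies λ₁(A^r #_α B^r) ≤ λ₁(A #_α B)^r, where A #_α B := A^{1/2}(A^{-1/2} B A^{-1/2})^α A^{1/2}. -/

import Mathlib

open scoped ComplexOrder
open Matrix

/-- The `t`-th power of a Hermitian matrix, defined via the spectral decomposition
(functional calculus with the real power function). -/
noncomputable def psdPow {n : ℕ} (A : Matrix (Fin n) (Fin n) ℂ) (hA : A.IsHermitian) (t : ℝ) :
    Matrix (Fin n) (Fin n) ℂ :=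
  (hA.eigenvectorUnitary : Matrix (Fin n) (Fin n) ℂ) *
    Matrix.diagonal (fun i => ((hA.eigenvalues i ^ t : ℝ) : ℂ)) *
    (hA.eigenvectorUnitary : Matrix (Fin n) (Fin n) ℂ)ᴴ

lemma psdPow_isHermitian {n : ℕ} (A : Matrix (Fin n) (Fin n) ℂ) (hA : A.IsHermitian) (t : ℝ) :
    (psdPow A hA t).IsHermitian := by
  unfold psdPow
  apply Matrix.isHermitian_mul_mul_conjTranspose
  rw [Matrix.isHermitian_diagonal_iff]
  intro i
  exact Complex.conj_ofReal _

lemma isHermitian_conj {n : ℕ} {C B : Matrix (Fin n) (Fin n) ℂ}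
    (hC : C.IsHermitian) (hB : B.IsHermitian) : (C * B * C).IsHermitian := by
  have := Matrix.isHermitian_mul_mul_conjTranspose C hB
  rwa [hC] at this

/-- The α-weighted geometric mean `A #_α B = A^{1/2} (A^{-1/2} B A^{-1/2})^α A^{1/2}`
of Hermitian (in applications, positive definite) matrices, where `A^{-1/2} = A^{(-1/2)}`
via functional calculus. -/
noncomputable def wGeomMean {n : ℕ} (A B : Matrix (Fin n) (Fin n) ℂ)
    (hA : A.IsHermitian) (hB : B.IsHermitian) (α : ℝ) : Matrix (Fin n) (Fin n) ℂ :=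
  psdPow A hA (1/2) *
    psdPow (psdPow A hA (-(1/2)) * B * psdPow A hA (-(1/2)))
      (isHermitian_conj (psdPow_isHermitian A hA (-(1/2))) hB) α *
    psdPow A hA (1/2)

lemma wGeomMean_isHermitian {n : ℕ} (A B : Matrix (Fin n) (Fin n) ℂ)
    (hA : A.IsHermitian) (hB : B.IsHermitian) (α : ℝ) : (wGeomMean A B hA hB α).IsHermitian :=
  isHermitian_conj (psdPow_isHermitian A hA (1/2)) (psdPow_isHermitian _ _ α)

section General
variable {𝔸 : Type*} [CStarAlgebra 𝔸] [PartialOrder 𝔸] [StarOrderedRing 𝔸]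
open CFC

lemma ah_rpow_unitary {u x : 𝔸} (h1 : star u * u = 1) (h2 : u * star u = 1)
    (hx : IsStrictlyPositive x) (α : ℝ) : (star u * x * u) ^ α = star u * x ^ α * u := by
  let U : unitary 𝔸 := ⟨u, h1, h2⟩
  let φ := Unitary.conjStarAlgAut ℂ 𝔸 (star U)
  have hφ : ∀ y, φ y = star u * y * u := by
    intro y
    simp [φ, U]
  have hc : Continuous φ := by
    have : (φ : 𝔸 → 𝔸) = fun y => star u * y * u := funext hφ
    rw [this]
    fun_prop
  have hnn : 0 ≤ φ x := by
    rw [hφ]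
    exact star_left_conjugate_nonneg hx.nonneg u
  rw [← hφ, ← hφ, rpow_eq_cfc_real hnn, rpow_eq_cfc_real hx.nonneg]
  symm
  refine StarAlgHomClass.map_cfc (S := ℂ) φ (fun x : ℝ => x ^ α) x ?_ hc
    hx.isSelfAdjoint (IsSelfAdjoint.of_nonneg hnn)
  intro y hy
  exact (Real.continuousAt_rpow_const y α (Or.inl (hx.spectrum_pos hy).ne')).continuousWithinAt

lemma ah_sp_conj {x s : 𝔸} (hx : IsStrictlyPositive x) (hs : IsStrictlyPositive s) :
    IsStrictlyPositive (s * x * s) := by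
  have := (hs.isUnit.isStrictlyPositive_star_right_conjugate_iff (a := x)).2 hx
  rwa [hs.isSelfAdjoint.star_eq] at this

lemma ah_sp_rpow {x : 𝔸} (hx : IsStrictlyPositive x) (t : ℝ) : IsStrictlyPositive (x ^ t) :=
  IsStrictlyPositive.rpow x t hx

lemma ah_star_rpow (x : 𝔸) (t : ℝ) : star (x ^ t) = x ^ t :=
  (IsSelfAdjoint.of_nonneg rpow_nonneg).star_eq

lemma ah_mul {x : 𝔸} (hx : IsStrictlyPositive x) (p q : ℝ) : x ^ p * x ^ q = x ^ (p + q) :=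
  (rpow_add hx.isUnit).symm

lemma ah_mul' {x : 𝔸} (hx : IsStrictlyPositive x) (p q : ℝ) (y : 𝔸) :
    x ^ p * (x ^ q * y) = x ^ (p + q) * y := by
  rw [← mul_assoc, ah_mul hx]

lemma ah_rpow_rpow {x : 𝔸} (hx : IsStrictlyPositive x) (p q : ℝ) :
    (x ^ p) ^ q = x ^ (p * q) := by
  by_cases hp : p = 0
  · subst hp
    rw [rpow_zero x hx.nonneg, zero_mul, rpow_zero x hx.nonneg, one_rpow]
  · exact rpow_rpow x p q hp hx

/-- weighted geometric mean -/
noncomputable def ahGm (a b : 𝔸) (α : ℝ) : 𝔸 :=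
  a ^ (1/2 : ℝ) * (a ^ (-(1/2) : ℝ) * b * a ^ (-(1/2) : ℝ)) ^ α * a ^ (1/2 : ℝ)

lemma ah_gm_sp {a b : 𝔸} (ha : IsStrictlyPositive a) (hb : IsStrictlyPositive b) (α : ℝ) :
    IsStrictlyPositive (ahGm a b α) :=
  ah_sp_conj (ah_sp_rpow (ah_sp_conj hb (ah_sp_rpow ha _)) _) (ah_sp_rpow ha _)

lemma ah_gm_root {a b s t : 𝔸} (ha : IsStrictlyPositive a) (hb : IsStrictlyPositive b)
    (hst : s * t = 1) (hts : t * s = 1) (has : s * star s = a) (α : ℝ) :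
    ahGm a b α = s * (t * b * star t) ^ α * star s := by
  obtain ⟨u, hu⟩ : ∃ u, u = a ^ (-(1/2) : ℝ) * s := ⟨_, rfl⟩
  have hus : star u = star s * a ^ (-(1/2) : ℝ) := by rw [hu, star_mul, ah_star_rpow]
  have h2 : u * star u = 1 := by
    rw [hus, hu]
    calc _ = a ^ (-(1/2) : ℝ) * (s * star s) * a ^ (-(1/2) : ℝ) := by simp only [mul_assoc]
      _ = a ^ (-(1/2) : ℝ) * a ^ (1 : ℝ) * a ^ (-(1/2) : ℝ) := by rw [has, rpow_one a ha.nonneg]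
      _ = 1 := by
        rw [ah_mul ha, ah_mul ha]; norm_num; exact rpow_zero a ha.nonneg
  have h3 : (t * a ^ (1/2 : ℝ)) * u = 1 := by
    rw [hu]
    simp only [mul_assoc, ah_mul' ha]
    norm_num
    rw [rpow_zero a ha.nonneg, one_mul, hts]
  have h4 : t * a ^ (1/2 : ℝ) = star u := left_inv_eq_right_inv h3 h2
  have h1 : star u * u = 1 := by rw [← h4, h3]
  have h5 : t = star u * a ^ (-(1/2) : ℝ) := by
    rw [← h4, mul_assoc, rpow_mul_rpow_neg _ ha, mul_one]
  have h6 : s * star u = a ^ (1/2 : ℝ) := by rw [← h4, ← mul_assoc, hst, one_mul]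
  have h7 : u * star s = a ^ (1/2 : ℝ) := by
    have := congrArg star h6
    rwa [star_mul, star_star, ah_star_rpow] at this
  have h8 : t * b * star t = star u * (a ^ (-(1/2) : ℝ) * b * a ^ (-(1/2) : ℝ)) * u := by
    rw [h5, star_mul, star_star, ah_star_rpow]
    simp only [mul_assoc]
  rw [h8, ah_rpow_unitary h1 h2 (ah_sp_conj hb (ah_sp_rpow ha _)), ahGm, ← h6]
  nth_rewrite 2 [h6]
  rw [← h7]
  simp only [mul_assoc]

lemma ah_gm_swap {a b : 𝔸} (ha : IsStrictlyPositive a) (hb : IsStrictlyPositive b) (α : ℝ) :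
    ahGm b a (1 - α) = ahGm a b α := by
  obtain ⟨X, hX⟩ : ∃ X, X = a ^ (-(1/2) : ℝ) * b * a ^ (-(1/2) : ℝ) := ⟨_, rfl⟩
  have hXp : IsStrictlyPositive X := hX ▸ ah_sp_conj hb (ah_sp_rpow ha _)
  have e0 := rpow_zero a ha.nonneg
  have e0X := rpow_zero X hXp.nonneg
  have hb' : a ^ (1/2 : ℝ) * X * a ^ (1/2 : ℝ) = b := by
    rw [hX]
    simp only [mul_assoc, ah_mul' ha, ah_mul ha]
    norm_num [e0]
  rw [ah_gm_root (s := a ^ (1/2 : ℝ) * X ^ (1/2 : ℝ)) (t := X ^ (-(1/2) : ℝ) * a ^ (-(1/2) : ℝ))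
    hb ha ?_ ?_ ?_]
  · have : X ^ (-(1/2) : ℝ) * a ^ (-(1/2) : ℝ) * a * star (X ^ (-(1/2) : ℝ) * a ^ (-(1/2) : ℝ))
        = X ^ (-1 : ℝ) := by
      rw [star_mul, ah_star_rpow, ah_star_rpow]
      nth_rewrite 2 [← rpow_one a ha.nonneg]
      simp only [mul_assoc, ah_mul' ha, ah_mul' hXp]
      norm_num [e0, ah_mul hXp]
    rw [this, ah_rpow_rpow hXp, ahGm, ← hX, star_mul, ah_star_rpow, ah_star_rpow]
    simp only [mul_assoc, ah_mul' hXp]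
    congr 3
    ring
  · simp only [mul_assoc, ah_mul' hXp]
    norm_num [e0X, ah_mul ha, e0]
  · simp only [mul_assoc, ah_mul' ha]
    norm_num [e0X, ah_mul hXp, e0]
  · rw [star_mul, ah_star_rpow, ah_star_rpow]
    simp only [mul_assoc, ah_mul' hXp]
    norm_num [rpow_one X hXp.nonneg]
    rw [← mul_assoc]
    norm_num at hb'
    exact hb'

lemma ah_gm_mono_right {a b c : 𝔸} (h : b ≤ c) {α : ℝ} (h0 : 0 ≤ α) (h1 : α ≤ 1) :
    ahGm a b α ≤ ahGm a c α := by
  unfold ahGm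
  refine IsSelfAdjoint.conjugate_le_conjugate (rpow_le_rpow ⟨h0, h1⟩ ?_) (ah_star_rpow _ _)
  exact IsSelfAdjoint.conjugate_le_conjugate h (ah_star_rpow _ _)

lemma ah_gm_mono {a b c d : 𝔸} (ha : IsStrictlyPositive a) (hb : IsStrictlyPositive b)
    (hc : IsStrictlyPositive c) (h : a ≤ c) (h' : b ≤ d)
    {α : ℝ} (h0 : 0 ≤ α) (h1 : α ≤ 1) :
    ahGm a b α ≤ ahGm c d α := by
  refine le_trans ?_ (ah_gm_mono_right h' h0 h1)
  rw [← ah_gm_swap ha hb, ← ah_gm_swap hc hb]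
  exact ah_gm_mono_right h (by linarith) (by linarith)

lemma ah_gm_rpow {c : 𝔸} (hc : IsStrictlyPositive c) (p q α : ℝ) :
    ahGm (c ^ p) (c ^ q) α = c ^ ((1 - α) * p + α * q) := by
  unfold ahGm
  simp only [ah_rpow_rpow hc, ah_mul hc]
  congr 1
  ring

/-- congruence by a power -/
lemma ah_gm_congr {a x y : 𝔸} (ha : IsStrictlyPositive a) (hx : IsStrictlyPositive x)
    (hy : IsStrictlyPositive y) (p α : ℝ) :
    ahGm (a ^ p * x * a ^ p) (a ^ p * y * a ^ p) α = a ^ p * ahGm x y α * a ^ p := by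
  have hap := ah_sp_rpow ha p
  have e0 := rpow_zero a ha.nonneg
  have e0x := rpow_zero x hx.nonneg
  rw [ah_gm_root (s := a ^ p * x ^ (1/2 : ℝ)) (t := x ^ (-(1/2) : ℝ) * a ^ (-p))
    (ah_sp_conj hx hap) (ah_sp_conj hy hap) ?_ ?_ ?_]
  · rw [star_mul, ah_star_rpow, ah_star_rpow, star_mul, ah_star_rpow, ah_star_rpow, ahGm]
    have : x ^ (-(1/2) : ℝ) * a ^ (-p) * (a ^ p * y * a ^ p) * (a ^ (-p) * x ^ (-(1/2) : ℝ))
       = x ^ (-(1/2) : ℝ) * y * x ^ (-(1/2) : ℝ) := by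
      simp only [mul_assoc, ah_mul' ha]
      simp [e0]
    rw [this]
    simp only [mul_assoc]
  · simp only [mul_assoc, ah_mul' hx]
    norm_num [e0x, ah_mul ha, e0]
  · simp only [mul_assoc, ah_mul' ha]
    norm_num [e0x, ah_mul hx, e0]
  · rw [star_mul, ah_star_rpow, ah_star_rpow]
    simp only [mul_assoc, ah_mul' hx]
    norm_num [rpow_one x hx.nonneg]

lemma ah_step {A B : 𝔸} (hA : IsStrictlyPositive A) (hB : IsStrictlyPositive B)
    {α r : ℝ} (h0 : 0 ≤ α) (h1 : α ≤ 1) (hr : 1 ≤ r) (hr2 : r ≤ 2) (h : ahGm A B α ≤ 1) :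
    ahGm (A ^ r) (B ^ r) α ≤ 1 := by
  obtain ⟨C, hC⟩ : ∃ C, C = A ^ (-(1/2) : ℝ) * B * A ^ (-(1/2) : ℝ) := ⟨_, rfl⟩
  have hCp : IsStrictlyPositive C := hC ▸ ah_sp_conj hB (ah_sp_rpow hA _)
  have e0 := rpow_zero A hA.nonneg
  have e1 := rpow_one A hA.nonneg
  have hCA : C ^ α ≤ A ^ (-1 : ℝ) := by
    have := IsSelfAdjoint.conjugate_le_conjugate h (ah_star_rpow A (-(1/2)))
    rw [ahGm, ← hC, mul_one, ah_mul hA] at this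
    simp only [mul_assoc, ah_mul' hA, ah_mul hA] at this
    norm_num [e0] at this
    exact this
  have hAC : A ≤ C ^ (-α) := by
    have := CStarAlgebra.rpow_neg_one_le_rpow_neg_one hCA (ah_sp_rpow hCp _)
    rw [ah_rpow_rpow hA, ah_rpow_rpow hCp] at this
    norm_num [e1] at this
    exact this
  have hB' : A ^ (1/2 : ℝ) * C * A ^ (1/2 : ℝ) = B := by
    rw [hC]
    simp only [mul_assoc, ah_mul' hA, ah_mul hA]
    norm_num [e0]
  -- the second argument
  have hD : A ^ (-(1/2) : ℝ) * C ^ (-1 : ℝ) * A ^ (-(1/2) : ℝ) = B ^ (-1 : ℝ) := by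
    have hBinv : B * B ^ (-1 : ℝ) = 1 := by
      nth_rewrite 1 [← rpow_one B hB.nonneg]
      exact rpow_mul_rpow_neg 1 hB
    refine left_inv_eq_right_inv (a := B) ?_ hBinv
    rw [← hB']
    simp only [mul_assoc, ah_mul' hA]
    norm_num [e0]
    nth_rewrite 2 [← rpow_one C hCp.nonneg]
    rw [ah_mul' hCp]
    norm_num [rpow_zero C hCp.nonneg, ah_mul hA, e0]
  have hy : A ^ (-(1/2) : ℝ) * B ^ r * A ^ (-(1/2) : ℝ) = C * ahGm A (C ^ (-1 : ℝ)) (2 - r) * C := by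
    have hCl : C * A ^ (1/2 : ℝ) = A ^ (-(1/2) : ℝ) * B := by
      rw [hC]
      simp only [mul_assoc, ah_mul hA]
      norm_num [e0]
    have hCr : A ^ (1/2 : ℝ) * C = B * A ^ (-(1/2) : ℝ) := by
      rw [hC]
      simp only [mul_assoc, ah_mul' hA]
      norm_num [e0]
    rw [ahGm, hD, ah_rpow_rpow hB]
    calc _ = A ^ (-(1/2) : ℝ) * (B ^ (1:ℝ) * B ^ (-1 * (2 - r)) * B ^ (1:ℝ)) * A ^ (-(1/2) : ℝ) := by
          rw [ah_mul hB, ah_mul hB]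
          congr 3
          ring
      _ = (A ^ (-(1/2) : ℝ) * B) * B ^ (-1 * (2 - r)) * (B * A ^ (-(1/2) : ℝ)) := by
          rw [rpow_one B hB.nonneg]
          simp only [mul_assoc]
      _ = _ := by
          rw [← hCl, ← hCr]
          simp only [mul_assoc]
  have hyp : IsStrictlyPositive (A ^ (-(1/2) : ℝ) * B ^ r * A ^ (-(1/2) : ℝ)) :=
    ah_sp_conj (ah_sp_rpow hB _) (ah_sp_rpow hA _)
  have hy2 : A ^ (-(1/2) : ℝ) * B ^ r * A ^ (-(1/2) : ℝ) ≤ C ^ (r - α * (r - 1)) := by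
    have h3 : ahGm A (C ^ (-1 : ℝ)) (2 - r) ≤ C ^ ((1 - (2 - r)) * (-α) + (2 - r) * (-1)) := by
      rw [← ah_gm_rpow hCp]
      exact ah_gm_mono hA (ah_sp_rpow hCp _) (ah_sp_rpow hCp _) hAC le_rfl (by linarith)
        (by linarith)
    rw [hy]
    refine (IsSelfAdjoint.conjugate_le_conjugate h3 hCp.isSelfAdjoint).trans (le_of_eq ?_)
    nth_rewrite 1 3 [← rpow_one C hCp.nonneg]
    rw [ah_mul hCp, ah_mul hCp]
    congr 1
    ring
  have hx2 : A ^ (r - 1) ≤ C ^ (-α * (r - 1)) := by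
    rw [← ah_rpow_rpow hCp]
    exact rpow_le_rpow ⟨by linarith, by linarith⟩ hAC
  have hfin : ahGm (A ^ (r - 1)) (A ^ (-(1/2) : ℝ) * B ^ r * A ^ (-(1/2) : ℝ)) α
      ≤ A ^ (-1 : ℝ) := by
    refine (ah_gm_mono (ah_sp_rpow hA _) hyp (ah_sp_rpow hCp _) hx2 hy2 h0 h1).trans ?_
    rw [ah_gm_rpow hCp]
    refine le_trans (le_of_eq ?_) hCA
    congr 1
    ring
  have hA1 : A ^ r = A ^ (1/2 : ℝ) * A ^ (r - 1) * A ^ (1/2 : ℝ) := by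
    rw [ah_mul hA, ah_mul hA]
    congr 1
    ring
  have hB1 : B ^ r = A ^ (1/2 : ℝ) * (A ^ (-(1/2) : ℝ) * B ^ r * A ^ (-(1/2) : ℝ))
      * A ^ (1/2 : ℝ) := by
    simp only [mul_assoc, ah_mul' hA, ah_mul hA]
    norm_num [e0]
  rw [hA1, hB1, ah_gm_congr hA (ah_sp_rpow hA _) hyp]
  refine (IsSelfAdjoint.conjugate_le_conjugate hfin (ah_star_rpow A (1/2))).trans (le_of_eq ?_)
  rw [ah_mul hA, ah_mul hA]
  norm_num [e0]

lemma ah_iter {α : ℝ} (h0 : 0 ≤ α) (h1 : α ≤ 1) (k : ℕ) :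
    ∀ {A B : 𝔸} (_ : IsStrictlyPositive A) (_ : IsStrictlyPositive B) {r : ℝ}
    (_ : 1 ≤ r) (_ : r ≤ 2 ^ k) (_ : ahGm A B α ≤ 1), ahGm (A ^ r) (B ^ r) α ≤ 1 := by
  induction k with
  | zero =>
    intro A B hA hB r hr hr2 h
    exact ah_step hA hB h0 h1 hr (by norm_num at hr2; linarith) h
  | succ k ih =>
    intro A B hA hB r hr hr2 h
    by_cases h2 : r ≤ 2
    · exact ah_step hA hB h0 h1 hr h2 h
    · have := ah_step (r := 2) (ah_sp_rpow hA (r / 2)) (ah_sp_rpow hB (r / 2)) h0 h1 (by norm_num)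
        le_rfl (ih hA hB (r := r / 2) (by linarith) (by rw [pow_succ] at hr2; linarith) h)
      rw [ah_rpow_rpow hA, ah_rpow_rpow hB] at this
      simpa using this

lemma ah_smul_rpow {a : 𝔸} (ha : IsStrictlyPositive a) {c : ℝ} (hc : 0 < c) (t : ℝ) :
    (c • a) ^ t = (c ^ t) • a ^ t := by
  have hca : IsStrictlyPositive (c • a) := IsStrictlyPositive.smul hc ha
  have hcont : ContinuousOn (fun x : ℝ => x ^ t) (spectrum ℝ a) := fun y hy =>
    (Real.continuousAt_rpow_const y t (Or.inl (ha.spectrum_pos hy).ne')).continuousWithinAt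
  have h1 : c • a = cfc (fun x : ℝ => c * x) a := by
    have := cfc_const_mul_id (R := ℝ) c a ha.isSelfAdjoint
    exact this.symm
  rw [h1, cfc_rpow (fun x hx => mul_pos hc (ha.spectrum_pos hx)) (by fun_prop) ha.isSelfAdjoint,
    rpow_eq_cfc_real ha.nonneg, ← cfc_smul (c ^ t) (fun x : ℝ => x ^ t) a hcont]
  refine cfc_congr fun x hx => ?_
  simp [Real.mul_rpow hc.le (ha.spectrum_pos hx).le]

lemma ah_gm_smul {a b : 𝔸} (ha : IsStrictlyPositive a) (hb : IsStrictlyPositive b)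
    {c : ℝ} (hc : 0 < c) (α : ℝ) : ahGm (c • a) (c • b) α = c • ahGm a b α := by
  unfold ahGm
  have e : c ^ (-(1/2) : ℝ) * c * c ^ (-(1/2) : ℝ) = 1 := by
    nth_rewrite 2 [← Real.rpow_one c]
    rw [← Real.rpow_add hc, ← Real.rpow_add hc]
    norm_num
  have e' : c ^ (1/2 : ℝ) * c ^ (1/2 : ℝ) = c := by
    rw [← Real.rpow_add hc]
    norm_num
  rw [ah_smul_rpow ha hc, ah_smul_rpow ha hc]
  simp only [smul_mul_assoc, mul_smul_comm, smul_smul]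
  have e2 : c ^ (-(1/2) : ℝ) * (c * c ^ (-(1/2) : ℝ)) = 1 := by rw [← mul_assoc, e]
  simp only [e2, e', one_smul]

theorem ah_general {A B : 𝔸} (hA : IsStrictlyPositive A) (hB : IsStrictlyPositive B)
    {α r c : ℝ} (h0 : 0 ≤ α) (h1 : α ≤ 1) (hr : 1 ≤ r) (hc : 0 < c)
    (h : ahGm A B α ≤ algebraMap ℝ 𝔸 c) :
    ahGm (A ^ r) (B ^ r) α ≤ algebraMap ℝ 𝔸 (c ^ r) := by
  have hci : 0 < c⁻¹ := inv_pos.2 hc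
  obtain ⟨k, hk⟩ := pow_unbounded_of_one_lt r (one_lt_two)
  have h2 : ahGm (c⁻¹ • A) (c⁻¹ • B) α ≤ 1 := by
    rw [ah_gm_smul hA hB hci]
    refine (smul_le_smul_of_nonneg_left h hci.le).trans (le_of_eq ?_)
    rw [Algebra.algebraMap_eq_smul_one, smul_smul, inv_mul_cancel₀ hc.ne', one_smul]
  have h3 := ah_iter h0 h1 k (IsStrictlyPositive.smul hci hA) (IsStrictlyPositive.smul hci hB)
    hr hk.le h2
  rw [ah_smul_rpow hA hci, ah_smul_rpow hB hci,
    ah_gm_smul (ah_sp_rpow hA _) (ah_sp_rpow hB _) (Real.rpow_pos_of_pos hci r)] at h3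
  have h4 := smul_le_smul_of_nonneg_left h3 (Real.rpow_nonneg hc.le r)
  rw [smul_smul, ← Real.mul_rpow hc.le hci.le, mul_inv_cancel₀ hc.ne', Real.one_rpow, one_smul,
    ← Algebra.algebraMap_eq_smul_one] at h4
  exact h4

end General

section Mat
open scoped Matrix.Norms.L2Operator MatrixOrder

lemma ah_psdPow {n : ℕ} (A : Matrix (Fin n) (Fin n) ℂ) (hA : A.PosDef)
    (hA' : A.IsHermitian) (t : ℝ) :
    psdPow A hA' t = A ^ t := by
  rw [CFC.rpow_eq_cfc_real hA.isStrictlyPositive.nonneg, hA'.cfc_eq, Matrix.IsHermitian.cfc,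
    Unitary.conjStarAlgAut_apply]
  rfl

lemma ah_wGeomMean {n : ℕ} (A B : Matrix (Fin n) (Fin n) ℂ) (hA : A.PosDef) (hB : B.PosDef)
    (hA' : A.IsHermitian) (hB' : B.IsHermitian) (α : ℝ) :
    wGeomMean A B hA' hB' α = ahGm A B α := by
  have hX : (psdPow A hA' (-(1/2)) * B * psdPow A hA' (-(1/2))).PosDef := by
    rw [ah_psdPow A hA]
    exact (ah_sp_conj hB.isStrictlyPositive (ah_sp_rpow hA.isStrictlyPositive _)).posDef
  unfold wGeomMean ahGm
  rw [ah_psdPow _ hX, ah_psdPow A hA, ah_psdPow A hA]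

end Mat

open scoped Matrix.Norms.L2Operator MatrixOrder in
lemma ah_aux {n : ℕ} (A B : Matrix (Fin n) (Fin n) ℂ)
    (hA : A.PosDef) (hB : B.PosDef) (α r : ℝ) (hα₀ : 0 ≤ α) (hα₁ : α ≤ 1) (hr : 1 ≤ r) :
    (⨆ i, (wGeomMean_isHermitian (psdPow A hA.1 r) (psdPow B hB.1 r)
        (psdPow_isHermitian A hA.1 r) (psdPow_isHermitian B hB.1 r) α).eigenvalues i)
      ≤ (⨆ i, (wGeomMean_isHermitian A B hA.1 hB.1 α).eigenvalues i) ^ r := by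
  rcases isEmpty_or_nonempty (Fin n) with hn | hn
  · rw [Real.iSup_of_isEmpty]
    exact Real.rpow_nonneg (by rw [Real.iSup_of_isEmpty]) r
  obtain ⟨c, hc⟩ : ∃ c, c = ⨆ i, (wGeomMean_isHermitian A B hA.1 hB.1 α).eigenvalues i := ⟨_, rfl⟩
  have hle : ∀ i, (wGeomMean_isHermitian A B hA.1 hB.1 α).eigenvalues i ≤ c := fun i =>
    hc ▸ le_ciSup (Set.finite_range _).bddAbove i
  have hG := ah_wGeomMean A B hA hB hA.1 hB.1 α
  have hsp : (wGeomMean A B hA.1 hB.1 α).PosDef := by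
    rw [hG]
    exact (ah_gm_sp hA.isStrictlyPositive hB.isStrictlyPositive α).posDef
  have hcpos : 0 < c := lt_of_lt_of_le (hsp.eigenvalues_pos hn.some) (hle hn.some)
  have h1 : ahGm A B α ≤ algebraMap ℝ _ c := by
    rw [← hG]
    refine (le_algebraMap_iff_spectrum_le (p := IsSelfAdjoint)
      (wGeomMean_isHermitian A B hA.1 hB.1 α).isSelfAdjoint).2 ?_
    rw [(wGeomMean_isHermitian A B hA.1 hB.1 α).spectrum_real_eq_range_eigenvalues]
    rintro _ ⟨i, rfl⟩
    exact hle i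
  have h2 := ah_general hA.isStrictlyPositive hB.isStrictlyPositive hα₀ hα₁ hr hcpos h1
  have hAr : (psdPow A hA.1 r).PosDef := by
    rw [ah_psdPow A hA]
    exact (ah_sp_rpow hA.isStrictlyPositive _).posDef
  have hBr : (psdPow B hB.1 r).PosDef := by
    rw [ah_psdPow B hB]
    exact (ah_sp_rpow hB.isStrictlyPositive _).posDef
  rw [← ah_psdPow A hA hA.1, ← ah_psdPow B hB hB.1, ← ah_wGeomMean _ _ hAr hBr hAr.1 hBr.1] at h2
  rw [← hc]
  refine ciSup_le fun i => ?_
  refine (le_algebraMap_iff_spectrum_le (p := IsSelfAdjoint)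
      (wGeomMean_isHermitian _ _ hAr.1 hBr.1 α).isSelfAdjoint).1 h2 _ ?_
  rw [(wGeomMean_isHermitian _ _ hAr.1 hBr.1 α).spectrum_real_eq_range_eigenvalues]
  exact ⟨i, rfl⟩

/-- Ando–Hiai inequality (norm form): for positive definite `A, B`, `0 ≤ α ≤ 1` and
`r ≥ 1`, the largest eigenvalue satisfies `λ₁(A^r #_α B^r) ≤ λ₁(A #_α B)^r`. -/
theorem ando_hiai {n : ℕ} (A B : Matrix (Fin n) (Fin n) ℂ)
    (hA : A.PosDef) (hB : B.PosDef) (α r : ℝ) (hα₀ : 0 ≤ α) (hα₁ : α ≤ 1) (hr : 1 ≤ r) :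
    (⨆ i, (wGeomMean_isHermitian (psdPow A hA.1 r) (psdPow B hB.1 r)
        (psdPow_isHermitian A hA.1 r) (psdPow_isHermitian B hB.1 r) α).eigenvalues i)
      ≤ (⨆ i, (wGeomMean_isHermitian A B hA.1 hB.1 α).eigenvalues i) ^ r :=
  ah_aux A B hA hB α r hα₀ hα₁ hr
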